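/- arXiv:2411.10759 — 11 statements merged into one kernel-verified Lean document; each statement's English description precedes it below -/
import Mathlib

section
/- For every real a > 0, every integer q ≥ 1 and every real p > 0, the series ∑_{n=0}^∞ n^p e^{−a n^q} converges and satisfies ∑_{n=0}^∞ n^p e^{−a n^q} ≤ (1/q) · a^{−(1+p)/q} · Γ((1+p)/q) + 2 · (p/(a·q))^{p/q}. -/
/-!
The function `f x = x ^ p * exp (-a * x ^ q)` on `[0, ∞)` increases up to `c = (p / (a q)) ^ (1 / q)`
and decreases afterwards, because `f' x = x ^ (p - 1) * exp (-a * x ^ q) * (p - a q x ^ q)`.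
For such a unimodal function the sum over `ℕ` exceeds the integral over `(0, ∞)` by at most `2 f c`
(`tsum_le_integral_add_two_mul`): with `N = ⌊c⌋`, the terms below `N` are bounded by the integral
over `(0, N]`, those above `N + 1` by the integral over `(N + 1, ∞)`, and the two remaining terms
by `f c` each. Here `f c ≤ c ^ p = (p / (a q)) ^ (p / q)`, and the integral is a Gamma value.
-/

open MeasureTheory Set in
/-- Integral test for a nonnegative function on `[0, ∞)` that increases up to `c` and decreases
afterwards. -/
theorem tsum_le_integral_add_two_mul {f : ℝ → ℝ} {c : ℝ} (hc : 0 ≤ c)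
    (hmono : MonotoneOn f (Icc 0 c)) (hanti : AntitoneOn f (Ici c))
    (hint : IntegrableOn f (Ioi 0)) (hnonneg : ∀ x, 0 ≤ x → 0 ≤ f x) :
    Summable (fun n : ℕ => f n) ∧ ∑' n : ℕ, f n ≤ (∫ x in Ioi 0, f x) + 2 * f c := by
  have hle : ∀ x, 0 ≤ x → f x ≤ f c := fun x hx => by
    rcases le_total x c with h | h
    · exact hmono ⟨hx, h⟩ ⟨hc, le_rfl⟩ h
    · exact hanti self_mem_Ici h h
  set N := ⌊c⌋₊ with hN
  have hNc : (N : ℝ) ≤ c := Nat.floor_le hc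
  have hcN : c ≤ ((N + 1 : ℕ) : ℝ) := by
    push_cast
    exact (Nat.lt_floor_add_one c).le
  have hanti' : AntitoneOn f (Ici ((N + 1 : ℕ) : ℝ)) := hanti.mono (Ici_subset_Ici.2 hcN)
  have hint' : IntegrableOn f (Ioi ((N + 1 : ℕ) : ℝ)) :=
    hint.mono_set (Ioi_subset_Ioi (Nat.cast_nonneg _))
  have hnonneg' : ∀ t ∈ Ioi ((N + 1 : ℕ) : ℝ), 0 ≤ f t := fun t ht =>
    hnonneg t ((Nat.cast_nonneg _).trans (le_of_lt ht))
  have hsum : Summable (fun n : ℕ => f n) := hanti'.summable_of_integrableOn_Ioi hint' hnonneg'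
  refine ⟨hsum, ?_⟩
  have htail := hanti'.tsum_comp_add_le_integral (N + 1) hint' hnonneg'
  have hhead : ∑ n ∈ Finset.range N, f n ≤ ∫ x in Ioc 0 (N : ℝ), f x := by
    have := MonotoneOn.sum_le_integral_Ico (f := f) (a := 0) (b := N) (Nat.zero_le _)
      (hmono.mono (Icc_subset_Icc (by simp) hNc))
    rw [intervalIntegral.integral_of_le (by simp)] at this
    simpa using this
  have hunion : (∫ x in Ioc 0 (N : ℝ), f x) + ∫ x in Ioi ((N + 1 : ℕ) : ℝ), f x
      ≤ ∫ x in Ioi 0, f x := by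
    rw [← setIntegral_union _ measurableSet_Ioi (hint.mono_set Ioc_subset_Ioi_self) hint']
    · refine setIntegral_mono_set hint ?_ (Filter.Eventually.of_forall ?_)
      · filter_upwards [ae_restrict_mem measurableSet_Ioi] with x hx
        exact hnonneg x (le_of_lt hx)
      · exact union_subset Ioc_subset_Ioi_self (Ioi_subset_Ioi (Nat.cast_nonneg _))
    · rw [Set.disjoint_left]
      intro x hx hx'
      have h1 := hx.2
      have h2 : ((N + 1 : ℕ) : ℝ) < x := hx'
      push_cast at h2
      linarith
  have h1 := hle N (Nat.cast_nonneg _)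
  have h2 := hle (N + 1 : ℕ) (Nat.cast_nonneg _)
  have hsplit := hsum.sum_add_tsum_nat_add (N + 1 + 1)
  rw [Finset.sum_range_succ, Finset.sum_range_succ] at hsplit
  simp only [← add_assoc] at htail hsplit
  linarith

theorem hasDerivAt_rpow_mul_exp (a p : ℝ) (q : ℕ) {x : ℝ} (hx : 0 < x) :
    HasDerivAt (fun x : ℝ => x ^ p * Real.exp (-a * x ^ q))
      (x ^ (p - 1) * Real.exp (-a * x ^ q) * (p - a * q * x ^ q)) x := by
  have h1 := Real.hasDerivAt_rpow_const (x := x) (p := p) (Or.inl hx.ne')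
  have h2 := ((hasDerivAt_pow q x).const_mul (-a)).exp
  convert! h1.mul h2 using 1
  have hxp : x ^ p = x ^ (p - 1) * x := by
    rw [Real.rpow_sub_one hx.ne', div_mul_cancel₀ _ hx.ne']
  rcases q with _ | q
  · simp; ring
  · rw [hxp, Nat.add_sub_cancel]
    ring

theorem sum_npow_exp_le (a : ℝ) (ha : 0 < a) (q : ℕ) (hq : 1 ≤ q) (p : ℝ) (hp : 0 < p) :
    Summable (fun n : ℕ => (n : ℝ) ^ p * Real.exp (-a * (n : ℝ) ^ q)) ∧
    ∑' n : ℕ, (n : ℝ) ^ p * Real.exp (-a * (n : ℝ) ^ q) ≤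
      (1 / (q : ℝ)) * a ^ (-(1 + p) / (q : ℝ)) * Real.Gamma ((1 + p) / (q : ℝ))
        + 2 * (p / (a * (q : ℝ))) ^ (p / (q : ℝ)) := by
  have hq0 : (0 : ℝ) < q := by exact_mod_cast hq
  have hb : 0 < p / (a * q) := by positivity
  set c : ℝ := (p / (a * q)) ^ (1 / (q : ℝ)) with hc
  have hc0 : 0 < c := Real.rpow_pos_of_pos hb _
  have hcq : a * q * c ^ q = p := by
    rw [hc, ← Real.rpow_natCast, ← Real.rpow_mul hb.le, one_div_mul_cancel hq0.ne', Real.rpow_one]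
    field_simp
  have hcp : c ^ p = (p / (a * q)) ^ (p / (q : ℝ)) := by
    rw [hc, ← Real.rpow_mul hb.le]
    congr 1
    ring
  set f : ℝ → ℝ := fun x => x ^ p * Real.exp (-a * x ^ q) with hf
  have hcont : Continuous f :=
    (Real.continuous_rpow_const hp.le).mul (by fun_prop)
  have hmono : MonotoneOn f (Set.Icc 0 c) := by
    refine monotoneOn_of_deriv_nonneg (convex_Icc 0 c) hcont.continuousOn ?_ ?_
    · rw [interior_Icc]
      exact fun x hx => (hasDerivAt_rpow_mul_exp a p q hx.1).differentiableAt.differentiableWithinAt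
    · rw [interior_Icc]
      intro x hx
      have hx0 := hx.1
      rw [(hasDerivAt_rpow_mul_exp a p q hx0).deriv]
      have : a * q * x ^ q ≤ a * q * c ^ q := by
        have := hx.2.le
        gcongr
      exact mul_nonneg (by positivity) (by linarith)
  have hanti : AntitoneOn f (Set.Ici c) := by
    refine antitoneOn_of_deriv_nonpos (convex_Ici c) hcont.continuousOn ?_ ?_
    · rw [interior_Ici]
      exact fun x hx =>
        (hasDerivAt_rpow_mul_exp a p q (hc0.trans hx)).differentiableAt.differentiableWithinAt
    · rw [interior_Ici]
      intro x hx
      have hx0 : 0 < x := hc0.trans hx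
      rw [(hasDerivAt_rpow_mul_exp a p q hx0).deriv]
      have : a * q * c ^ q ≤ a * q * x ^ q := by
        have : c ≤ x := le_of_lt hx
        gcongr
      exact mul_nonpos_of_nonneg_of_nonpos (by positivity) (by linarith)
  have hint : MeasureTheory.IntegrableOn f (Set.Ioi 0) := by
    have := integrableOn_rpow_mul_exp_neg_mul_rpow (s := p) (p := (q : ℝ)) (b := a)
      (by linarith) (by exact_mod_cast hq) ha
    simpa only [Real.rpow_natCast] using this
  have hval : ∫ x in Set.Ioi 0, f x =
      (1 / (q : ℝ)) * a ^ (-(1 + p) / (q : ℝ)) * Real.Gamma ((1 + p) / (q : ℝ)) := by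
    have := integral_rpow_mul_exp_neg_mul_rpow (p := (q : ℝ)) (q := p) (b := a) hq0
      (by linarith) ha
    simp only [Real.rpow_natCast] at this
    rw [hf, this, add_comm p 1]
    ring_nf
  have hfc : f c ≤ c ^ p := by
    refine mul_le_of_le_one_right (by positivity) (Real.exp_le_one_iff.2 ?_)
    have : 0 ≤ a * c ^ q := by positivity
    linarith
  obtain ⟨h1, h2⟩ := tsum_le_integral_add_two_mul hc0.le hmono hanti hint
    (fun x hx => by simp only [hf]; positivity)
  refine ⟨h1, h2.trans ?_⟩
  rw [hval, ← hcp]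
  linarith
end

section
/- For every real a > 0, every integer q ≥ 1 and every real p₀ > 0, there exists a constant c > 0, depending only on a, q and p₀ (and not on p), such that for every real p ≥ p₀ the series ∑_{n=0}^∞ n^p e^{−a n^q} converges and ∑_{n=0}^∞ n^p e^{−a n^q} ≤ c^p · a^{−(1+p)/q} · Γ(p+1)^{1/q}. -/
/-!
Restricting Euler's integral for `Γ(p+1)` to `(t, ∞)` gives `t^p e^{-t} ≤ Γ(p+1)` for every
`t ≥ 0`. With `t = (qa/2) n^q` and a `q`-th root, this bounds `n^p e^{-a n^q / 2}` by
`(qa/2)^{-p/q} Γ(p+1)^{1/q}` uniformly in `n`. The other half `e^{-a n^q / 2}` of the exponential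
is at most `e^{-a n / 2}`, which is summable with a sum `S` independent of `p`. Finally, a constant
factor `K ≥ 1` is at most `(K^{1/p₀})^p` when `p ≥ p₀`, so `S` can be absorbed into `c^p`.
-/

open MeasureTheory in
/-- Euler's integral for `Γ(p+1)`, restricted to `(t, ∞)`, where `x^p ≥ t^p`. -/
lemma rpow_mul_exp_neg_le_Gamma {p t : ℝ} (hp : 0 < p) (ht : 0 ≤ t) :
    t ^ p * Real.exp (-t) ≤ Real.Gamma (p + 1) := by
  have hint : IntegrableOn (fun x : ℝ => Real.exp (-x) * x ^ (p + 1 - 1)) (Set.Ioi 0) :=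
    Real.GammaIntegral_convergent (by linarith)
  rw [Real.Gamma_eq_integral (by linarith), ← integral_exp_neg_Ioi t, ← integral_const_mul]
  refine le_trans (setIntegral_mono_on ?_ (hint.mono_set (Set.Ioi_subset_Ioi ht))
    measurableSet_Ioi ?_) (setIntegral_mono_set hint ?_ ?_)
  · exact (integrableOn_exp_neg_Ioi t).const_mul _
  · intro x hx
    rw [add_sub_cancel_right, mul_comm]
    gcongr
    exact le_of_lt hx
  · filter_upwards [ae_restrict_mem measurableSet_Ioi] with x hx
    have : (0 : ℝ) < x := hx
    simp only [Pi.zero_apply]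
    positivity
  · exact (Set.Ioi_subset_Ioi ht).eventuallyLE

lemma rpow_mul_exp_neg_pow_le {a p x : ℝ} (ha : 0 < a) (hp : 0 < p) (hx : 0 ≤ x) {q : ℕ}
    (hq : 1 ≤ q) :
    x ^ p * Real.exp (-(a / 2 * x ^ q)) ≤
      ((q * a / 2) ^ (-(1 / (q : ℝ)))) ^ p * Real.Gamma (p + 1) ^ (1 / (q : ℝ)) := by
  have hq0 : (0 : ℝ) < q := by exact_mod_cast hq
  have hb : 0 < q * a / 2 := by positivity
  have h := rpow_mul_exp_neg_le_Gamma hp (t := q * a / 2 * x ^ q) (by positivity)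
  have h2 := Real.rpow_le_rpow (by positivity) h (z := 1 / (q : ℝ)) (by positivity)
  have hxq : ((x ^ q) ^ p) ^ (1 / (q : ℝ)) = x ^ p := by
    rw [← Real.rpow_natCast, ← Real.rpow_mul hx, ← Real.rpow_mul hx]
    congr 1
    field_simp
  have he : Real.exp (-(q * a / 2 * x ^ q)) ^ (1 / (q : ℝ)) = Real.exp (-(a / 2 * x ^ q)) := by
    rw [← Real.exp_mul]
    congr 1
    field_simp
  have hbb : ((q * a / 2) ^ (-(1 / (q : ℝ)))) ^ p * ((q * a / 2) ^ p) ^ (1 / (q : ℝ)) = 1 := by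
    rw [← Real.rpow_mul hb.le, ← Real.rpow_mul hb.le, ← Real.rpow_add hb]
    ring_nf
    exact Real.rpow_zero _
  rw [Real.mul_rpow (by positivity) (by positivity), Real.mul_rpow (by positivity) (by positivity),
    Real.mul_rpow (by positivity) (by positivity), hxq, he] at h2
  calc x ^ p * Real.exp (-(a / 2 * x ^ q))
      = ((q * a / 2) ^ (-(1 / (q : ℝ)))) ^ p * (((q * a / 2) ^ p) ^ (1 / (q : ℝ)) * x ^ p *
          Real.exp (-(a / 2 * x ^ q))) := by
        linear_combination (-(x ^ p * Real.exp (-(a / 2 * x ^ q)))) * hbb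
    _ ≤ _ := by gcongr

/-- Lemma 3, first assertion. For every real `a > 0`, every integer `q ≥ 1`
and every real `p₀ > 0`, there exists a constant `c > 0`, depending only on `a`, `q` and `p₀`
(and not on `p`), such that for every real `p ≥ p₀` the series `∑_{n=0}^∞ n^p e^{−a n^q}`
converges and `∑_{n=0}^∞ n^p e^{−a n^q} ≤ c^p · a^{−(1+p)/q} · Γ(p+1)^{1/q}`. -/
theorem sum_npow_exp_le_const_pow (a : ℝ) (ha : 0 < a) (q : ℕ) (hq : 1 ≤ q)
    (p₀ : ℝ) (hp₀ : 0 < p₀) :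
    ∃ c : ℝ, 0 < c ∧ ∀ p : ℝ, p₀ ≤ p →
      Summable (fun n : ℕ => (n : ℝ) ^ p * Real.exp (-a * (n : ℝ) ^ q)) ∧
      ∑' n : ℕ, (n : ℝ) ^ p * Real.exp (-a * (n : ℝ) ^ q) ≤
        c ^ p * a ^ (-(1 + p) / (q : ℝ)) * Real.Gamma (p + 1) ^ (1 / (q : ℝ)) := by
  have hq0 : (0 : ℝ) < q := by exact_mod_cast hq
  have hS : Summable (fun n : ℕ => Real.exp (n * (-(a / 2)))) :=
    Real.summable_exp_nat_mul_iff.mpr (by linarith)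
  set S := ∑' n : ℕ, Real.exp (n * (-(a / 2)))
  set K := max 1 (S * a ^ (1 / (q : ℝ)))
  have hK1 : 1 ≤ K := le_max_left _ _
  have hK0 : 0 < K := by linarith
  refine ⟨((q : ℝ) / 2) ^ (-(1 / (q : ℝ))) * K ^ (1 / p₀), by positivity, fun p hp => ?_⟩
  have hp0 : 0 < p := by linarith
  have hG : 0 < Real.Gamma (p + 1) := Real.Gamma_pos_of_pos (by linarith)
  set M := ((q * a / 2) ^ (-(1 / (q : ℝ)))) ^ p * Real.Gamma (p + 1) ^ (1 / (q : ℝ)) with hM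
  have hterm : ∀ n : ℕ, (n : ℝ) ^ p * Real.exp (-a * (n : ℝ) ^ q) ≤
      M * Real.exp (n * (-(a / 2))) := by
    intro n
    have hn : (n : ℝ) ≤ (n : ℝ) ^ q := by exact_mod_cast Nat.le_self_pow (by omega) n
    have hsplit : Real.exp (-a * (n : ℝ) ^ q) =
        Real.exp (-(a / 2 * (n : ℝ) ^ q)) * Real.exp (-(a / 2 * (n : ℝ) ^ q)) := by
      rw [← Real.exp_add]
      ring_nf
    rw [hsplit, ← mul_assoc]
    refine mul_le_mul (rpow_mul_exp_neg_pow_le ha hp0 (Nat.cast_nonneg n) hq)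
      (Real.exp_le_exp.mpr (by nlinarith)) (by positivity) (by positivity)
  have hsum : Summable (fun n : ℕ => (n : ℝ) ^ p * Real.exp (-a * (n : ℝ) ^ q)) :=
    Summable.of_nonneg_of_le (fun n => by positivity) hterm (hS.mul_left M)
  refine ⟨hsum, (hsum.tsum_le_tsum hterm (hS.mul_left M)).trans ?_⟩
  rw [tsum_mul_left]
  have hKp : K ≤ (K ^ (1 / p₀)) ^ p := by
    rw [← Real.rpow_mul hK0.le]
    refine Real.self_le_rpow_of_one_le hK1 ?_
    rw [one_div_mul_eq_div, one_le_div hp₀]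
    exact hp
  have hSK : S ≤ K * a ^ (-(1 / (q : ℝ))) := by
    rw [Real.rpow_neg ha.le, ← div_eq_mul_inv, le_div_iff₀ (by positivity)]
    exact le_max_right _ _
  have hb : (q * a / 2) ^ (-(1 / (q : ℝ))) =
      ((q : ℝ) / 2) ^ (-(1 / (q : ℝ))) * a ^ (-(1 / (q : ℝ))) := by
    rw [← Real.mul_rpow (by positivity) ha.le]
    ring_nf
  have hap : a ^ (-(1 + p) / (q : ℝ)) = a ^ (-(1 / (q : ℝ))) * (a ^ (-(1 / (q : ℝ)))) ^ p := by
    rw [← Real.rpow_mul ha.le, ← Real.rpow_add ha]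
    ring_nf
  rw [hM, hb, hap, Real.mul_rpow (by positivity) (by positivity),
    Real.mul_rpow (by positivity) (by positivity)]
  calc _ ≤ (((q : ℝ) / 2) ^ (-(1 / (q : ℝ)))) ^ p * (a ^ (-(1 / (q : ℝ)))) ^ p *
        Real.Gamma (p + 1) ^ (1 / (q : ℝ)) *
        ((K ^ (1 / p₀)) ^ p * a ^ (-(1 / (q : ℝ)))) := by
        gcongr
        exact hSK.trans (by gcongr)
    _ = _ := by ring
end

section
/- For every integer q ≥ 1 and every real p₀ > 0, there exists a constant c₁ > 0, depending only on q and p₀ (and not on p), such that for every real p ≥ p₀: Γ((1+p)/q) ≤ c₁^p · Γ(p+1)^{1/q}. -/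
/-!
Log-convexity of `Γ` says that `b ↦ Γ (a + b) / Γ b` is nondecreasing on `(0, ∞)`, so the quotient
`Γ a * Γ b / Γ (a + b)` is nonincreasing in each of `a` and `b`. On `[x₀, ∞)²` it is therefore at
most `K = Γ x₀ ^ 2 / Γ (2 * x₀)`, and induction on `q` gives `Γ x ^ q ≤ K ^ (q - 1) * Γ (q * x)`
for `x ≥ x₀`. With `x = (1 + p) / q`, `x₀ = 1 / q` and `K` enlarged to be at least `1`, this reads
`Γ ((1 + p) / q) ≤ K * Γ (p + 1) ^ (1 / q)`. The factor `K` is absorbed in `c₁ ^ p` for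
`c₁ = K ^ (1 / p₀)`, because `p ≥ p₀`.
-/

/-- The function `b ↦ Γ (a + b) / Γ b` is nondecreasing on `(0, ∞)`, in cross-multiplied form. -/
lemma gamma_mul_gamma_add_le {a b x : ℝ} (ha : 0 < a) (hx : 0 < x) (hxb : x ≤ b) :
    Real.Gamma b * Real.Gamma (a + x) ≤ Real.Gamma x * Real.Gamma (a + b) := by
  have hD : 0 < a + b - x := by linarith
  rcases hxb.eq_or_lt with rfl | hlt
  · exact le_rfl
  -- `b` and `a + x` are the convex combinations of `x` and `a + b` with swapped weights `s`, `t`.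
  obtain ⟨s, hs⟩ : ∃ s, s = a / (a + b - x) := ⟨_, rfl⟩
  obtain ⟨t, ht⟩ : ∃ t, t = (b - x) / (a + b - x) := ⟨_, rfl⟩
  have hs0 : 0 < s := hs ▸ div_pos ha hD
  have ht0 : 0 < t := ht ▸ div_pos (by linarith) hD
  have hst : s + t = 1 := by rw [hs, ht]; field_simp; ring
  have hab : 0 < a + b := by linarith
  have h1 := Real.Gamma_mul_add_mul_le_rpow_Gamma_mul_rpow_Gamma hx hab hs0 ht0 hst
  have h2 := Real.Gamma_mul_add_mul_le_rpow_Gamma_mul_rpow_Gamma hx hab ht0 hs0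
    (by linarith)
  have e1 : s * x + t * (a + b) = b := by rw [hs, ht]; field_simp; ring
  have e2 : t * x + s * (a + b) = a + x := by rw [hs, ht]; field_simp; ring
  rw [e1] at h1
  rw [e2] at h2
  have gx := Real.Gamma_pos_of_pos hx
  have gab := Real.Gamma_pos_of_pos hab
  calc Real.Gamma b * Real.Gamma (a + x)
      ≤ (Real.Gamma x ^ s * Real.Gamma (a + b) ^ t) *
          (Real.Gamma x ^ t * Real.Gamma (a + b) ^ s) :=
        mul_le_mul h1 h2 (Real.Gamma_pos_of_pos (by linarith)).le (by positivity)
    _ = (Real.Gamma x ^ s * Real.Gamma x ^ t) *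
          (Real.Gamma (a + b) ^ s * Real.Gamma (a + b) ^ t) := by ring
    _ = Real.Gamma x * Real.Gamma (a + b) := by
        rw [← Real.rpow_add gx, ← Real.rpow_add gab, hst, Real.rpow_one, Real.rpow_one]

/-- The beta function is bounded on `[x, ∞)²` by its value at the corner `(x, x)`. -/
lemma gamma_mul_gamma_le {a b x : ℝ} (hx : 0 < x) (hxa : x ≤ a) (hxb : x ≤ b) :
    Real.Gamma a * Real.Gamma b ≤
      Real.Gamma x ^ 2 / Real.Gamma (x + x) * Real.Gamma (a + b) := by
  have h1 := gamma_mul_gamma_add_le (hx.trans_le hxa) hx hxb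
  have h2 := gamma_mul_gamma_add_le hx hx hxa
  have gx := Real.Gamma_pos_of_pos hx
  have gxx := Real.Gamma_pos_of_pos (add_pos hx hx)
  have gb := Real.Gamma_pos_of_pos (hx.trans_le hxb)
  rw [div_mul_eq_mul_div, le_div_iff₀ gxx]
  rw [add_comm x a] at h2
  nlinarith [mul_le_mul_of_nonneg_left h2 gb.le, mul_le_mul_of_nonneg_left h1 gx.le]

lemma gamma_pow_le {K x : ℝ} (hK : 1 ≤ K) (hx : 0 < x)
    (h : ∀ b, x ≤ b → Real.Gamma x * Real.Gamma b ≤ K * Real.Gamma (x + b)) (n : ℕ) :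
    Real.Gamma x ^ (n + 1) ≤ K ^ (n + 1) * Real.Gamma ((n + 1 : ℕ) * x) := by
  have gx := Real.Gamma_pos_of_pos hx
  induction n with
  | zero => simpa using le_mul_of_one_le_left gx.le hK
  | succ n ih =>
    have hb : x ≤ (n + 1 : ℕ) * x :=
      le_mul_of_one_le_left hx.le (by exact_mod_cast Nat.le_add_left 1 n)
    have e : x + (n + 1 : ℕ) * x = (n + 1 + 1 : ℕ) * x := by push_cast; ring
    calc Real.Gamma x ^ (n + 1 + 1) = Real.Gamma x * Real.Gamma x ^ (n + 1) := by ring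
      _ ≤ Real.Gamma x * (K ^ (n + 1) * Real.Gamma ((n + 1 : ℕ) * x)) := by gcongr
      _ = K ^ (n + 1) * (Real.Gamma x * Real.Gamma ((n + 1 : ℕ) * x)) := by ring
      _ ≤ K ^ (n + 1) * (K * Real.Gamma (x + (n + 1 : ℕ) * x)) := by
          exact mul_le_mul_of_nonneg_left (h _ hb) (by positivity)
      _ = K ^ (n + 1 + 1) * Real.Gamma ((n + 1 + 1 : ℕ) * x) := by rw [e]; ring

/-- Eq. (213) of the paper. For every integer `q ≥ 1` and every real
`p₀ > 0`, there exists a constant `c₁ > 0`, depending only on `q` and `p₀` (and not on `p`),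
such that for every real `p ≥ p₀`: `Γ((1+p)/q) ≤ c₁^p · Γ(p+1)^{1/q}`. -/
theorem gamma_quotient_le_const_pow (q : ℕ) (hq : 1 ≤ q) (p₀ : ℝ) (hp₀ : 0 < p₀) :
    ∃ c₁ : ℝ, 0 < c₁ ∧ ∀ p : ℝ, p₀ ≤ p →
      Real.Gamma ((1 + p) / (q : ℝ)) ≤ c₁ ^ p * Real.Gamma (p + 1) ^ (1 / (q : ℝ)) := by
  have hq0 : (0 : ℝ) < q := by exact_mod_cast hq
  have hx₀ : (0 : ℝ) < 1 / q := by positivity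
  obtain ⟨K, hKdef⟩ : ∃ K : ℝ,
      K = max 1 (Real.Gamma (1 / q) ^ 2 / Real.Gamma (1 / q + 1 / q)) := ⟨_, rfl⟩
  have hK : 1 ≤ K := hKdef ▸ le_max_left _ _
  have hK0 : 0 < K := by linarith
  refine ⟨K ^ (1 / p₀), by positivity, fun p hp => ?_⟩
  have hp0 : 0 < p := hp₀.trans_le hp
  have hxx : 1 / (q : ℝ) ≤ (1 + p) / q := by gcongr; linarith
  have hx := hx₀.trans_le hxx
  have gx := Real.Gamma_pos_of_pos hx
  have gp : 0 < Real.Gamma (p + 1) := Real.Gamma_pos_of_pos (by linarith)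
  have hpow : Real.Gamma ((1 + p) / q) ^ q ≤ K ^ q * Real.Gamma (p + 1) := by
    have h := gamma_pow_le hK hx (fun b hb =>
      (gamma_mul_gamma_le hx₀ hxx (hxx.trans hb)).trans
        (mul_le_mul_of_nonneg_right (hKdef ▸ le_max_right _ _)
          (Real.Gamma_pos_of_pos (by linarith)).le)) (q - 1)
    rw [Nat.sub_add_cancel hq, mul_div_cancel₀ _ hq0.ne'] at h
    rwa [add_comm p 1]
  have hroot : Real.Gamma ((1 + p) / q) ≤ K * Real.Gamma (p + 1) ^ (1 / (q : ℝ)) := by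
    refine le_of_pow_le_pow_left₀ (n := q) (by omega) (by positivity) ?_
    rwa [mul_pow, ← Real.rpow_mul_natCast gp.le, one_div_mul_cancel hq0.ne', Real.rpow_one]
  have hc : K ≤ (K ^ (1 / p₀)) ^ p := by
    rw [← Real.rpow_mul hK0.le]
    refine Real.self_le_rpow_of_one_le hK ?_
    rw [one_div_mul_eq_div, le_div_iff₀ hp₀]
    linarith
  exact hroot.trans (by gcongr)
end

section
/- Fix an integer q ≥ 1, a real a_q > 0, reals a_1, …, a_{q−1}, and a real a_0 ≥ 0, and write W(n) = −a_q n^q + a_{q−1} n^{q−1} + ⋯ + a_1 n + a_0 and B = |a_0| + |a_1| + ⋯ + |a_{q−1}|. Then ∑_{n=0}^∞ exp(W(n)) ≥ exp(−B^q (q−1)^{q−1}/(a_q^{q−1} q^q)) · 2^{−1/q} · Γ(1 + 1/q) · a_q^{−1/q}, with the convention 0^0 = 1 in the factor (q−1)^{q−1} when q = 1. (If the series diverges, the inequality holds trivially.) -/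
/-! Write `p = q - 1`, `a = aq`, and `C` for the exponent subtracted on the left-hand side. For
natural `n`, the lower-order part of `W(n)` is at least `-B n ^ p` (for `n ≥ 1` because `n ^ k ≤ n ^ p`
for `k ≤ p`, for `n = 0` because `a 0 ≥ 0`), and weighted AM-GM gives `B x ^ p ≤ a x ^ (p + 1) + C` for
`x ≥ 0` (`mul_pow_le_add_max`). Hence `W(n) ≥ -2 a n ^ q - C`. Since `x ↦ exp (-2 a x ^ q)` is
antitone on `[0, ∞)`, its sum over `ℕ` dominates its integral, which is
`(2 a) ^ (-1 / q) Γ(1 + 1 / q)`.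

The series does converge, so the real `tsum` is not a junk value (`summable_exp_poly`): the same
AM-GM bound with `a / 2` in place of `a` gives `W(n) ≤ -(a / 2) n + const` for `n ≥ 1`. -/

/-- Weighted AM-GM for `p` copies of `u ^ (p + 1)` and one of `v ^ (p + 1)`. -/
lemma succ_mul_mul_pow_le (p : ℕ) {u v : ℝ} (hu : 0 ≤ u) (hv : 0 ≤ v) :
    ((p : ℝ) + 1) * v * u ^ p ≤ p * u ^ (p + 1) + v ^ (p + 1) := by
  induction p with
  | zero => simp
  | succ p ih =>
    have h1 := mul_le_mul_of_nonneg_left ih hv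
    have h2 : 0 ≤ ((p : ℝ) + 1) * u ^ p * (u - v) ^ 2 := by positivity
    push_cast
    -- the difference of the two sides is `v` times that of the case `p`, plus the square term `h2`
    have h3 : ((p : ℝ) + 1) * u ^ (p + 1 + 1) + v ^ (p + 1 + 1) - ((p : ℝ) + 1 + 1) * v * u ^ (p + 1)
        = (v * (p * u ^ (p + 1) + v ^ (p + 1)) - v * (((p : ℝ) + 1) * v * u ^ p))
          + ((p : ℝ) + 1) * u ^ p * (u - v) ^ 2 := by ring
    linarith

/-- The added constant is the maximum of `B x ^ p - a x ^ (p + 1)` over `x ≥ 0`, attained at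
`x = p B / ((p + 1) a)`. -/
lemma mul_pow_le_add_max (p : ℕ) {a B x : ℝ} (ha : 0 < a) (hB : 0 ≤ B) (hx : 0 ≤ x) :
    B * x ^ p ≤ a * x ^ (p + 1) + B ^ (p + 1) * (p : ℝ) ^ p / (a ^ p * ((p : ℝ) + 1) ^ (p + 1)) := by
  rcases Nat.eq_zero_or_pos p with rfl | hp
  · simp only [pow_zero, mul_one, zero_add, pow_one, Nat.cast_zero, div_one]
    have := mul_nonneg ha.le hx
    linarith
  · have hp' : (0 : ℝ) < p := by exact_mod_cast hp
    have h := succ_mul_mul_pow_le p (u := a * x * (p + 1)) (v := p * B) (by positivity) (by positivity)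
    have hD : 0 < a ^ p * ((p : ℝ) + 1) ^ (p + 1) := by positivity
    rw [← sub_le_iff_le_add', le_div_iff₀ hD]
    refine le_of_mul_le_mul_left ?_ hp'
    have e1 : ((p : ℝ) + 1) * (p * B) * (a * x * (p + 1)) ^ p
        = p * (B * x ^ p * (a ^ p * ((p : ℝ) + 1) ^ (p + 1))) := by
      rw [mul_pow, mul_pow]; ring
    have e2 : (p : ℝ) * (a * x * (p + 1)) ^ (p + 1)
        = p * (a * x ^ (p + 1) * (a ^ p * ((p : ℝ) + 1) ^ (p + 1))) := by
      rw [mul_pow, mul_pow]; ring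
    have e3 : ((p : ℝ) * B) ^ (p + 1) = p * (B ^ (p + 1) * (p : ℝ) ^ p) := by
      rw [mul_pow]; ring
    rw [e1, e2, e3] at h
    linarith

lemma abs_sum_mul_pow_le (p : ℕ) (a : ℕ → ℝ) {x : ℝ} (hx : 1 ≤ x) :
    |∑ k ∈ Finset.range (p + 1), a k * x ^ k| ≤ (∑ k ∈ Finset.range (p + 1), |a k|) * x ^ p := by
  refine (Finset.abs_sum_le_sum_abs _ _).trans ?_
  rw [Finset.sum_mul]
  refine Finset.sum_le_sum fun k hk => ?_
  rw [abs_mul, abs_of_nonneg (by positivity : 0 ≤ x ^ k)]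
  have : k ≤ p := by simpa [Nat.lt_succ_iff] using hk
  gcongr

lemma neg_le_sum_mul_pow (p : ℕ) (a : ℕ → ℝ) (ha0 : 0 ≤ a 0) (n : ℕ) :
    -((∑ k ∈ Finset.range (p + 1), |a k|) * (n : ℝ) ^ p) ≤
      ∑ k ∈ Finset.range (p + 1), a k * (n : ℝ) ^ k := by
  rcases Nat.eq_zero_or_pos n with rfl | hn
  · have h1 : ∑ k ∈ Finset.range (p + 1), a k * ((0 : ℕ) : ℝ) ^ k = a 0 := by
      rw [Finset.sum_range_succ']; simp
    rw [h1]
    have : 0 ≤ (∑ k ∈ Finset.range (p + 1), |a k|) * ((0 : ℕ) : ℝ) ^ p := by positivity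
    linarith
  · exact (abs_le.mp (abs_sum_mul_pow_le p a (by exact_mod_cast hn))).1

lemma summable_exp_poly (p : ℕ) {b : ℝ} (hb : 0 < b) (a : ℕ → ℝ) :
    Summable fun n : ℕ =>
      Real.exp (-b * (n : ℝ) ^ (p + 1) + ∑ k ∈ Finset.range (p + 1), a k * (n : ℝ) ^ k) := by
  set B := ∑ k ∈ Finset.range (p + 1), |a k| with hBdef
  have hB : 0 ≤ B := Finset.sum_nonneg fun _ _ => abs_nonneg _
  set C := B ^ (p + 1) * (p : ℝ) ^ p / ((b / 2) ^ p * ((p : ℝ) + 1) ^ (p + 1)) with hC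
  have hs : Summable fun n : ℕ => Real.exp C * Real.exp (n * (-(b / 2))) :=
    (Real.summable_exp_nat_mul_iff.mpr (by linarith)).mul_left _
  refine Summable.of_norm_bounded_eventually_nat hs ?_
  filter_upwards [Filter.eventually_ge_atTop 1] with n hn
  have hn' : (1 : ℝ) ≤ n := by exact_mod_cast hn
  rw [Real.norm_eq_abs, Real.abs_exp, ← Real.exp_add]
  apply Real.exp_le_exp.mpr
  have h1 := (abs_le.mp (abs_sum_mul_pow_le p a hn')).2
  have h2 := mul_pow_le_add_max p (half_pos hb) hB (x := n) (by positivity)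
  have h3 : (n : ℝ) ≤ (n : ℝ) ^ (p + 1) := le_self_pow₀ hn' (by omega)
  have h4 := mul_le_mul_of_nonneg_left h3 (half_pos hb).le
  linarith

/-- Integral comparison, phrased through a bound on partial sums. -/
lemma integral_le_of_sum_le (q : ℕ) (hq : 1 ≤ q) {b S : ℝ} (hb : 0 < b)
    (hS : ∀ N : ℕ, ∑ n ∈ Finset.range N, Real.exp (-b * (n : ℝ) ^ q) ≤ S) :
    b ^ (-(1 / (q : ℝ))) * Real.Gamma (1 + 1 / (q : ℝ)) ≤ S := by
  have hq' : (0 : ℝ) < q := by exact_mod_cast hq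
  have hint := integral_exp_neg_mul_rpow hq' hb
  simp only [Real.rpow_natCast] at hint
  have hpos : 0 < b ^ (-1 / (q : ℝ)) * Real.Gamma (1 / (q : ℝ) + 1) :=
    mul_pos (Real.rpow_pos_of_pos hb _) (Real.Gamma_pos_of_pos (by positivity))
  -- a non-integrable function would have integral `0`
  have hI : MeasureTheory.IntegrableOn (fun x : ℝ => Real.exp (-b * x ^ q)) (Set.Ioi 0) := by
    by_contra h
    rw [MeasureTheory.integral_undef h] at hint
    exact hpos.ne hint
  have hlim := MeasureTheory.intervalIntegral_tendsto_integral_Ioi 0 hI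
    (tendsto_natCast_atTop_atTop (R := ℝ))
  rw [hint] at hlim
  rw [← neg_div, add_comm (1 : ℝ)]
  refine le_of_tendsto' hlim fun N => le_trans ?_ (hS N)
  have hanti : AntitoneOn (fun x : ℝ => Real.exp (-b * x ^ q)) (Set.Icc 0 (0 + (N : ℝ))) := by
    intro x hx y _ hxy
    apply Real.exp_le_exp.mpr
    have := mul_le_mul_of_nonneg_left (pow_le_pow_left₀ hx.1 hxy q) hb.le
    linarith
  simpa using hanti.integral_le_sum

/-- Lemma 5 of the paper, with the extra hypothesis `a_0 ≥ 0`.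
Fix an integer `q ≥ 1`, a real `a_q > 0`, reals `a_1, …, a_{q−1}`, and a real `a_0 ≥ 0`;
write `W(n) = −a_q n^q + a_{q−1} n^{q−1} + ⋯ + a_1 n + a_0` and
`B = |a_0| + |a_1| + ⋯ + |a_{q−1}|`. Then
`∑_{n=0}^∞ exp(W(n)) ≥ exp(−B^q (q−1)^{q−1}/(a_q^{q−1} q^q)) · 2^{−1/q} · Γ(1 + 1/q) · a_q^{−1/q}`,
with the convention `0^0 = 1` in the factor `(q−1)^{q−1}` when `q = 1`. -/
theorem sum_exp_polynomial_ge (q : ℕ) (hq : 1 ≤ q) (aq : ℝ) (haq : 0 < aq)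
    (a : ℕ → ℝ) (ha0 : 0 ≤ a 0) :
    Real.exp (-((∑ k ∈ Finset.range q, |a k|) ^ q * ((q : ℝ) - 1) ^ (q - 1) /
          (aq ^ (q - 1) * (q : ℝ) ^ q))) *
        (2 : ℝ) ^ (-(1 / (q : ℝ))) * Real.Gamma (1 + 1 / (q : ℝ)) * aq ^ (-(1 / (q : ℝ))) ≤
      ∑' n : ℕ, Real.exp (-aq * (n : ℝ) ^ q + ∑ k ∈ Finset.range q, a k * (n : ℝ) ^ k) := by
  obtain ⟨p, rfl⟩ : ∃ p, q = p + 1 := ⟨q - 1, by omega⟩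
  have hsum := summable_exp_poly p haq a
  have hcast : ((p + 1 : ℕ) : ℝ) - 1 = p := by push_cast; ring
  rw [hcast, Nat.add_sub_cancel]
  set B := ∑ k ∈ Finset.range (p + 1), |a k| with hBdef
  have hB : 0 ≤ B := Finset.sum_nonneg fun _ _ => abs_nonneg _
  set C := B ^ (p + 1) * (p : ℝ) ^ p / (aq ^ p * ((p + 1 : ℕ) : ℝ) ^ (p + 1)) with hC
  set S := ∑' n : ℕ, Real.exp (-aq * (n : ℝ) ^ (p + 1) +
    ∑ k ∈ Finset.range (p + 1), a k * (n : ℝ) ^ k) with hSdef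
  have hterm : ∀ n : ℕ, Real.exp (-C) * Real.exp (-(2 * aq) * (n : ℝ) ^ (p + 1)) ≤
      Real.exp (-aq * (n : ℝ) ^ (p + 1) + ∑ k ∈ Finset.range (p + 1), a k * (n : ℝ) ^ k) := by
    intro n
    rw [← Real.exp_add]
    apply Real.exp_le_exp.mpr
    have h1 := neg_le_sum_mul_pow p a ha0 n
    have h2 := mul_pow_le_add_max p haq hB (x := n) (by positivity)
    have h3 : C = B ^ (p + 1) * (p : ℝ) ^ p / (aq ^ p * ((p : ℝ) + 1) ^ (p + 1)) := by
      rw [hC]; push_cast; rfl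
    rw [← h3] at h2
    linarith
  have key := integral_le_of_sum_le (p + 1) hq (b := 2 * aq) (S := Real.exp C * S) (by positivity) <| by
    intro N
    have h1 : ∑ n ∈ Finset.range N, Real.exp (-C) * Real.exp (-(2 * aq) * (n : ℝ) ^ (p + 1)) ≤ S :=
      (Finset.sum_le_sum fun n _ => hterm n).trans
        (hsum.sum_le_tsum _ fun _ _ => (Real.exp_pos _).le)
    rw [← Finset.mul_sum, Real.exp_neg, inv_mul_le_iff₀ (Real.exp_pos _)] at h1
    exact h1
  rw [Real.mul_rpow (by norm_num) haq.le, ← inv_mul_le_iff₀ (Real.exp_pos _), ← Real.exp_neg] at key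
  calc _ = _ := by ring
    _ ≤ S := key
end

section
/- For every real a > 0, every integer q ≥ 1 and every real p₀ > 0, there exists a constant c > 0, depending only on a, q and p₀ (and not on p), such that for every real p ≥ p₀ the series ∑_{n=0}^∞ (n + 2p)^p · e^{−a n^q} converges and ∑_{n=0}^∞ (n + 2p)^p · e^{−a n^q} ≤ c^p · a^{−(1+p)/q} · p^{p+1}. -/
/-! Since `n ^ q ≥ n`, it suffices to treat `q = 1` in the exponential. The elementary bound `x ≤ exp x`
at `x = a (n + 2p) / (2p)` gives `(n + 2p) ^ p ≤ (2p / a) ^ p * exp (a n / 2 + a p)`, so each term is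
at most `B ^ p * p ^ p * r ^ n` with `B = 2 exp a / a` and `r = exp (-a / 2) < 1`. Summing the
geometric series costs the factor `S = (1 - r)⁻¹`. As `c` may depend on `a`, `q` and `p₀`, the
remaining factors `S`, `a ^ (1 / q)` and `1 / p ≤ 1 / p₀` are absorbed into `c ^ p`.
-/

theorem shifted_pow_exp_term_le {a : ℝ} (ha : 0 < a) {q : ℕ} (hq : 1 ≤ q) {p : ℝ} (hp : 0 < p)
    (n : ℕ) :
    ((n : ℝ) + 2 * p) ^ p * Real.exp (-a * (n : ℝ) ^ q) ≤
      (2 * Real.exp a / a) ^ p * p ^ p * Real.exp (-(a / 2)) ^ n := by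
  have hn : (n : ℝ) ≤ (n : ℝ) ^ q := by exact_mod_cast Nat.le_self_pow (by omega) n
  have h1 : (n : ℝ) + 2 * p ≤ 2 * p / a * Real.exp (a * (n + 2 * p) / (2 * p)) := by
    have h := Real.add_one_le_exp (a * (n + 2 * p) / (2 * p))
    calc (n : ℝ) + 2 * p = 2 * p / a * (a * (n + 2 * p) / (2 * p)) := by field_simp
      _ ≤ _ := by gcongr; linarith
  have h2 : ((n : ℝ) + 2 * p) ^ p ≤ (2 * p / a) ^ p * Real.exp (a * n / 2 + a * p) := by
    calc ((n : ℝ) + 2 * p) ^ p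
        ≤ (2 * p / a * Real.exp (a * (n + 2 * p) / (2 * p))) ^ p := by gcongr
      _ = _ := by
        rw [Real.mul_rpow (by positivity) (by positivity), ← Real.exp_mul]
        congr 2
        field_simp
  calc ((n : ℝ) + 2 * p) ^ p * Real.exp (-a * (n : ℝ) ^ q)
      ≤ ((2 * p / a) ^ p * Real.exp (a * n / 2 + a * p)) * Real.exp (-a * n) := by
        refine mul_le_mul h2 (Real.exp_le_exp.2 ?_) (by positivity) (by positivity)
        nlinarith
    _ = (2 * Real.exp a / a) ^ p * p ^ p * Real.exp (-(a / 2)) ^ n := by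
        rw [← Real.mul_rpow (by positivity) (by positivity),
          show 2 * Real.exp a / a * p = 2 * p / a * Real.exp a by ring,
          Real.mul_rpow (by positivity) (by positivity), ← Real.exp_mul, ← Real.exp_nat_mul,
          mul_assoc, mul_assoc, ← Real.exp_add, ← Real.exp_add]
        congr 2
        ring

/-- Lemma 7 of the paper. For every real `a > 0`, every integer `q ≥ 1`
and every real `p₀ > 0`, there exists a constant `c > 0`, depending only on `a`, `q` and
`p₀` (and not on `p`), such that for every real `p ≥ p₀` the series
`∑_{n=0}^∞ (n + 2p)^p · e^{−a n^q}` converges and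
`∑_{n=0}^∞ (n + 2p)^p · e^{−a n^q} ≤ c^p · a^{−(1+p)/q} · p^{p+1}`. -/
theorem sum_shifted_pow_exp_le (a : ℝ) (ha : 0 < a) (q : ℕ) (hq : 1 ≤ q)
    (p₀ : ℝ) (hp₀ : 0 < p₀) :
    ∃ c : ℝ, 0 < c ∧ ∀ p : ℝ, p₀ ≤ p →
      Summable (fun n : ℕ => ((n : ℝ) + 2 * p) ^ p * Real.exp (-a * (n : ℝ) ^ q)) ∧
      ∑' n : ℕ, ((n : ℝ) + 2 * p) ^ p * Real.exp (-a * (n : ℝ) ^ q) ≤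
        c ^ p * a ^ (-(1 + p) / (q : ℝ)) * p ^ (p + 1) := by
  have hr : Real.exp (-(a / 2)) < 1 := by
    rw [Real.exp_lt_one_iff]
    linarith
  have hgeo := hasSum_geometric_of_lt_one (Real.exp_pos (-(a / 2))).le hr
  set S : ℝ := (1 - Real.exp (-(a / 2)))⁻¹ with hS
  have hS0 : 0 < S := inv_pos.2 (by linarith)
  set B : ℝ := 2 * Real.exp a / a with hB
  have hB0 : 0 < B := by positivity
  set A : ℝ := a ^ (1 / (q : ℝ)) with hA
  have hA0 : 0 < A := by positivity
  -- The factor `M ^ (1 / p₀)` of `c` contributes `M ^ (p / p₀) ≥ M ≥ S * A / p₀` to `c ^ p`.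
  set M : ℝ := max 1 (S * A / p₀) with hM
  have hM1 : 1 ≤ M := le_max_left _ _
  have hM0 : 0 < M := by linarith
  refine ⟨B * M ^ (1 / p₀) * A, by positivity, fun p hp => ?_⟩
  have hp0 : 0 < p := by linarith
  have hsum := hgeo.mul_left (B ^ p * p ^ p)
  have hle := shifted_pow_exp_term_le ha hq hp0
  have hsm : Summable (fun n : ℕ => ((n : ℝ) + 2 * p) ^ p * Real.exp (-a * (n : ℝ) ^ q)) :=
    Summable.of_nonneg_of_le (fun n => by positivity) hle hsum.summable
  refine ⟨hsm, (hsm.tsum_le_tsum hle hsum.summable).trans ?_⟩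
  rw [hsum.tsum_eq]
  have hMp : M ≤ M ^ (1 / p₀ * p) := by
    refine Real.self_le_rpow_of_one_le hM1 ?_
    rw [one_div_mul_eq_div, one_le_div hp₀]
    exact hp
  have hApow : A ^ p * a ^ (-(1 + p) / (q : ℝ)) = A⁻¹ := by
    rw [hA, ← Real.rpow_mul ha.le, ← Real.rpow_add ha, ← Real.rpow_neg ha.le]
    congr 1
    ring
  have hSle : S ≤ M ^ (1 / p₀ * p) * A⁻¹ * p := by
    have h1 : S * A / p₀ ≤ M ^ (1 / p₀ * p) := (le_max_right _ _).trans hMp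
    calc S = S * A / p₀ * A⁻¹ * p₀ := by field_simp
      _ ≤ _ := by gcongr
  calc B ^ p * p ^ p * S ≤ B ^ p * p ^ p * (M ^ (1 / p₀ * p) * A⁻¹ * p) := by gcongr
    _ = _ := by
      rw [Real.mul_rpow (by positivity) hA0.le, Real.mul_rpow hB0.le (by positivity),
        ← Real.rpow_mul hM0.le, Real.rpow_add_one hp0.ne', ← hApow]
      ring
end

section
/- Fix a positive even integer q, a real a_q > 0 and reals a_0, a_1, …, a_{q−1}, and write W(m) = −a_q m^q + a_{q−1} m^{q−1} + ⋯ + a_1 m + a_0 for integers m (possibly negative). There exists a constant c > 0, depending only on a_q, a_0, …, a_{q−1} and q (and not on p), such that for every integer p ≥ 1 the series ∑_{n=0}^∞ (n + 2p)^p · exp( max{ W(m) : m ∈ ℤ, n − p ≤ m ≤ n + p } ) converges and is at most c^{p+1} · a_q^{−(1+p)/q} · p!. -/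
/-!
Since `q ≥ 2`, the leading term `-aq * m ^ q` beats every lower-order term as well as `|m|`, so
`W m ≤ C - |m|` for some constant `C` (`exists_poly_le_sub_abs`, built on `exists_mul_pow_le`).
On the window `n - p ≤ m ≤ n + p` one has `|m| ≥ n - p`, whence the exponential factor is at most
`exp (C + p - n)`. With `x = n + 2p` and `x ^ p ≤ 2 ^ p * p! * exp (x / 2)`, the `n`-th term is at
most `exp C * (2 * exp 2) ^ p * p! * exp (-1 / 2) ^ n`, and the geometric series sums to a bound of
the form `K ^ (p + 1) * p!`. The factor `aq ^ (-(1 + p) / q)` is the `(p + 1)`-st power of the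
constant `aq ^ (-1 / q)`, so it is absorbed into `c`.
-/

/-- A lower-order monomial is dominated by any positive multiple of a higher-order one, up to an
additive constant. -/
lemma exists_mul_pow_le {k q : ℕ} (hk : k < q) (A ε : ℝ) (hA : 0 ≤ A) (hε : 0 < ε) :
    ∃ C : ℝ, ∀ t : ℝ, 0 ≤ t → A * t ^ k ≤ ε * t ^ q + C := by
  refine ⟨A * (max 1 (A / ε)) ^ k, fun t ht => ?_⟩
  rcases le_total t (max 1 (A / ε)) with h | h
  · have h1 : A * t ^ k ≤ A * (max 1 (A / ε)) ^ k := by gcongr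
    have h2 : 0 ≤ ε * t ^ q := by positivity
    linarith
  · have h1 : 1 ≤ t := (le_max_left _ _).trans h
    have h2 : A ≤ t * ε := (div_le_iff₀ hε).mp ((le_max_right _ _).trans h)
    have h3 : t ^ (k + 1) ≤ t ^ q := pow_le_pow_right₀ h1 hk
    have h4 : 0 ≤ A * (max 1 (A / ε)) ^ k := by positivity
    calc A * t ^ k ≤ (t * ε) * t ^ k := by gcongr
      _ = ε * t ^ (k + 1) := by ring
      _ ≤ ε * t ^ q := by gcongr
      _ ≤ _ := by linarith

lemma exists_poly_le_sub_abs (q : ℕ) (hq : 0 < q) (hqe : Even q)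
    (aq : ℝ) (haq : 0 < aq) (a : ℕ → ℝ) :
    ∃ C : ℝ, ∀ x : ℝ, -aq * x ^ q + ∑ k ∈ Finset.range q, a k * x ^ k ≤ C - |x| := by
  have hq2 : 1 < q := by
    obtain ⟨r, hr⟩ := hqe
    omega
  -- Half of the leading coefficient is shared equally by the `q` lower-order terms, and the other
  -- half absorbs `|x|`.
  have hε : 0 < aq / 2 / q := by positivity
  have key : ∀ k : ℕ, ∃ C : ℝ, k < q → ∀ t : ℝ, 0 ≤ t →
      |a k| * t ^ k ≤ aq / 2 / q * t ^ q + C := by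
    intro k
    by_cases hk : k < q
    · obtain ⟨C, hC⟩ := exists_mul_pow_le hk |a k| _ (abs_nonneg _) hε
      exact ⟨C, fun _ => hC⟩
    · exact ⟨0, fun h => absurd h hk⟩
  choose C hC using key
  obtain ⟨D, hD⟩ := exists_mul_pow_le hq2 1 (aq / 2) zero_le_one (by positivity)
  refine ⟨∑ k ∈ Finset.range q, C k + D, fun x => ?_⟩
  have h1 : ∑ k ∈ Finset.range q, a k * x ^ k
      ≤ ∑ k ∈ Finset.range q, (aq / 2 / q * |x| ^ q + C k) := by
    refine Finset.sum_le_sum fun k hk => ?_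
    refine le_trans ?_ (hC k (Finset.mem_range.mp hk) |x| (abs_nonneg x))
    rw [← abs_pow, ← abs_mul]
    exact le_abs_self _
  rw [Finset.sum_add_distrib, Finset.sum_const, Finset.card_range, nsmul_eq_mul] at h1
  have h2 : (q : ℝ) * (aq / 2 / q * |x| ^ q) = aq / 2 * |x| ^ q := by
    field_simp
  have h3 := hD |x| (abs_nonneg x)
  rw [pow_one, one_mul] at h3
  rw [hqe.pow_abs] at h2 h3 h1
  linarith

lemma pow_le_factorial_mul_exp_half (x : ℝ) (hx : 0 ≤ x) (p : ℕ) :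
    x ^ p ≤ 2 ^ p * (p.factorial : ℝ) * Real.exp (x / 2) := by
  have h := Real.pow_div_factorial_le_exp (x / 2) (by positivity) p
  rw [div_le_iff₀ (by positivity), div_pow, div_le_iff₀ (by positivity)] at h
  linarith

/-- Lemma 8, first assertion, Eq. (259) of the paper. Fix a positive even
integer `q`, a real `a_q > 0` and reals `a_0, …, a_{q−1}`, and write
`W(m) = −a_q m^q + a_{q−1} m^{q−1} + ⋯ + a_1 m + a_0` for integers `m`. There exists a
constant `c > 0`, depending only on the coefficients and `q` (and not on `p`), such that for
every integer `p ≥ 1` the series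
`∑_{n=0}^∞ (n + 2p)^p · exp( max{ W(m) : m ∈ ℤ, n − p ≤ m ≤ n + p } )` converges and is at
most `c^{p+1} · a_q^{−(1+p)/q} · p!`. -/
theorem sum_shifted_pow_exp_max_le (q : ℕ) (hq : 0 < q) (hqe : Even q)
    (aq : ℝ) (haq : 0 < aq) (a : ℕ → ℝ) :
    ∃ c : ℝ, 0 < c ∧ ∀ p : ℕ, 1 ≤ p →
      Summable (fun n : ℕ => ((n : ℝ) + 2 * p) ^ p *
        Real.exp ((Finset.Icc ((n : ℤ) - p) ((n : ℤ) + p)).sup'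
          (Finset.nonempty_Icc.mpr (by omega))
          (fun m : ℤ => -aq * (m : ℝ) ^ q + ∑ k ∈ Finset.range q, a k * (m : ℝ) ^ k))) ∧
      ∑' n : ℕ, ((n : ℝ) + 2 * p) ^ p *
          Real.exp ((Finset.Icc ((n : ℤ) - p) ((n : ℤ) + p)).sup'
            (Finset.nonempty_Icc.mpr (by omega))
            (fun m : ℤ => -aq * (m : ℝ) ^ q + ∑ k ∈ Finset.range q, a k * (m : ℝ) ^ k)) ≤
        c ^ (p + 1) * aq ^ (-(1 + (p : ℝ)) / (q : ℝ)) * (p.factorial : ℝ) := by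
  obtain ⟨C, hC⟩ := exists_poly_le_sub_abs q hq hqe aq haq a
  set r : ℝ := Real.exp (-1 / 2) with hr
  have hr0 : 0 < r := Real.exp_pos _
  have hr1 : r < 1 := Real.exp_lt_one_iff.mpr (by norm_num)
  have hS : 0 < (1 - r)⁻¹ := inv_pos.mpr (by linarith)
  set B : ℝ := 2 * Real.exp 2 with hB
  have hB0 : 0 < B := by positivity
  set K : ℝ := B + Real.exp C * (1 - r)⁻¹ with hK
  have hE : 0 < Real.exp C * (1 - r)⁻¹ := by positivity
  have hK0 : 0 < K := by positivity
  set d : ℝ := aq ^ (-1 / (q : ℝ)) with hd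
  have hd0 : 0 < d := Real.rpow_pos_of_pos haq _
  refine ⟨K / d, by positivity, fun p hp => ?_⟩
  have hdp : aq ^ (-(1 + (p : ℝ)) / (q : ℝ)) = d ^ (p + 1) := by
    rw [hd, ← Real.rpow_natCast, ← Real.rpow_mul haq.le]
    congr 1
    push_cast
    ring
  have hgeo : HasSum (fun n : ℕ => Real.exp C * B ^ p * (p.factorial : ℝ) * r ^ n)
      (Real.exp C * B ^ p * (p.factorial : ℝ) * (1 - r)⁻¹) :=
    (hasSum_geometric_of_lt_one hr0.le hr1).mul_left _
  have hterm : ∀ n : ℕ, ((n : ℝ) + 2 * p) ^ p *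
        Real.exp ((Finset.Icc ((n : ℤ) - p) ((n : ℤ) + p)).sup'
          (Finset.nonempty_Icc.mpr (by omega))
          (fun m : ℤ => -aq * (m : ℝ) ^ q + ∑ k ∈ Finset.range q, a k * (m : ℝ) ^ k)) ≤
      Real.exp C * B ^ p * (p.factorial : ℝ) * r ^ n := by
    intro n
    have h1 : (Finset.Icc ((n : ℤ) - p) ((n : ℤ) + p)).sup'
          (Finset.nonempty_Icc.mpr (by omega))
          (fun m : ℤ => -aq * (m : ℝ) ^ q + ∑ k ∈ Finset.range q, a k * (m : ℝ) ^ k)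
          ≤ C + p - n := by
      refine Finset.sup'_le _ _ fun m hm => (hC m).trans ?_
      have h2 : ((n : ℝ) - p) ≤ (m : ℝ) := by exact_mod_cast (Finset.mem_Icc.mp hm).1
      linarith [le_abs_self (m : ℝ)]
    calc _ ≤ (2 ^ p * (p.factorial : ℝ) * Real.exp (((n : ℝ) + 2 * p) / 2)) *
          Real.exp (C + p - n) := by
          gcongr
          exact pow_le_factorial_mul_exp_half _ (by positivity) p
      _ = _ := by
          have e1 : Real.exp (((n : ℝ) + 2 * p) / 2) * Real.exp (C + p - n)
              = Real.exp C * Real.exp 2 ^ p * r ^ n := by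
            rw [hr, ← Real.exp_nat_mul, ← Real.exp_nat_mul, ← Real.exp_add, ← Real.exp_add,
              ← Real.exp_add]
            congr 1
            ring
          rw [mul_assoc, e1, hB, mul_pow]
          ring
  have hsum := Summable.of_nonneg_of_le (fun n => by positivity) hterm hgeo.summable
  refine ⟨hsum, (hsum.tsum_le_tsum hterm hgeo.summable).trans ?_⟩
  rw [hgeo.tsum_eq, hdp, ← mul_pow, div_mul_cancel₀ _ hd0.ne']
  have hBK : B ^ p ≤ K ^ p := pow_le_pow_left₀ hB0.le (by linarith) p
  calc _ = (Real.exp C * (1 - r)⁻¹) * B ^ p * (p.factorial : ℝ) := by ring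
    _ ≤ K * K ^ p * (p.factorial : ℝ) := by
        gcongr
        linarith
    _ = _ := by ring
end

section
/- Let V be a finite set and let E be a finite set of subsets of V (called edges), each of cardinality at most k for some integer k ≥ 1, and suppose every x ∈ V belongs to at most 𝔡 edges of E, where 𝔡 ≥ 1. Let μ : E → ℕ be a multiplicity function, let g ≥ 0 be a natural number, and for each edge λ ∈ E and each x ∈ λ let g_{λ,x} be a natural number with g_{λ,x} ≤ g. Define |w| = ∑_{λ∈E} μ(λ) and, for each x ∈ V, m_x = ∑_{λ∈E : x∈λ} g_{λ,x} · μ(λ). Then: (i) ∑_{x∈V} m_x ≤ g·k·|w|, and (ii) ∏_{x∈V} (m_x)! ≤ 𝔡^{g·k·|w|} · ∏_{λ∈E} ((g·μ(λ))!)^k. -/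
/-!
The first bound is double counting over incident pairs `(x, e)`, `x ∈ e`: each edge `e` lies
over at most `k` sites and contributes at most `g * μ e` to each.

For the second, the multinomial coefficient of a composition of `n` into at most `d` parts is at
most `d ^ n`, being one of the terms in the multinomial expansion of `(1 + ⋯ + 1) ^ n`. Hence
`(m_x)! ≤ d ^ m_x * ∏ (gl e x * μ e)!`, the product running over the edges `e` containing `x`.
Taking the product over `x`, the powers of `d` are controlled by the first bound, and, after
exchanging the two products, each edge contributes at most `k` factors, each at most `(g * μ e)!`.
-/

/-- The multinomial coefficient is a term of the expansion of `(∑ i ∈ s, 1) ^ (∑ i ∈ s, f i)`. -/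
lemma multinomial_le_card_pow {α : Type*} [DecidableEq α] (s : Finset α) (f : α → ℕ) :
    Nat.multinomial s f ≤ s.card ^ (∑ i ∈ s, f i) := by
  -- `piAntidiag` consists of functions supported in `s`, so `f` is first truncated to `s`.
  let f' : α → ℕ := fun i => if i ∈ s then f i else 0
  have hf : ∀ i ∈ s, f i = f' i := fun i hi => by simp [f', hi]
  have hmem : f' ∈ s.piAntidiag (∑ i ∈ s, f i) := by
    rw [Finset.mem_piAntidiag]
    refine ⟨(Finset.sum_congr rfl hf).symm, fun i hi => ?_⟩
    by_contra h
    simp [f', h] at hi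
  have hexp := Finset.sum_pow_eq_sum_piAntidiag s (fun _ => (1 : ℕ)) (∑ i ∈ s, f i)
  simp only [Finset.sum_const, smul_eq_mul, mul_one, one_pow, Finset.prod_const_one,
    Nat.cast_id] at hexp
  rw [hexp, Nat.multinomial_congr hf]
  exact Finset.single_le_sum (f := fun c => Nat.multinomial s c) (fun _ _ => Nat.zero_le _) hmem

lemma factorial_sum_le {α : Type*} [DecidableEq α] (s : Finset α) (f : α → ℕ) (d : ℕ)
    (hs : s.card ≤ d) :
    (∑ i ∈ s, f i).factorial ≤ d ^ (∑ i ∈ s, f i) * ∏ i ∈ s, (f i).factorial := by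
  rw [← Nat.multinomial_spec, mul_comm]
  exact Nat.mul_le_mul_right _
    ((multinomial_le_card_pow s f).trans (Nat.pow_le_pow_left hs _))


/-- Lemma 10 of the paper. Let `V` be a finite set and `E` a finite set of
subsets of `V` (edges), each of cardinality at most `k ≥ 1`, and suppose every `x ∈ V` belongs
to at most `𝔡 ≥ 1` edges of `E`. Let `μ : E → ℕ` be a multiplicity function, `g ≥ 0` a natural
number, and for each edge `λ ∈ E` and `x ∈ λ` let `g_{λ,x} ≤ g` be a natural number. Define
`|w| = ∑_{λ∈E} μ(λ)` and `m_x = ∑_{λ∈E : x∈λ} g_{λ,x}·μ(λ)`. Then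
(i) `∑_{x∈V} m_x ≤ g·k·|w|`, and
(ii) `∏_{x∈V} (m_x)! ≤ 𝔡^{g·k·|w|} · ∏_{λ∈E} ((g·μ(λ))!)^k`. -/
theorem multiplicity_degree_bounds {V : Type*} [Fintype V] [DecidableEq V]
    (E : Finset (Finset V)) (k d g : ℕ) (hk : 1 ≤ k) (hd : 1 ≤ d)
    (hcard : ∀ e ∈ E, e.card ≤ k)
    (hdeg : ∀ x : V, (E.filter (fun e => x ∈ e)).card ≤ d)
    (μ : Finset V → ℕ) (gl : Finset V → V → ℕ)
    (hgl : ∀ e ∈ E, ∀ x ∈ e, gl e x ≤ g) :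
    (∑ x : V, ∑ e ∈ E.filter (fun e => x ∈ e), gl e x * μ e) ≤
        g * k * ∑ e ∈ E, μ e ∧
    (∏ x : V, (∑ e ∈ E.filter (fun e => x ∈ e), gl e x * μ e).factorial) ≤
        d ^ (g * k * ∑ e ∈ E, μ e) * ∏ e ∈ E, ((g * μ e).factorial) ^ k := by
  have hpair : ∀ (x : V) (e : Finset V),
      x ∈ Finset.univ ∧ e ∈ E.filter (fun e => x ∈ e) ↔ x ∈ e ∧ e ∈ E := by
    intro x e
    simp [and_comm]
  have hsum : (∑ x : V, ∑ e ∈ E.filter (fun e => x ∈ e), gl e x * μ e) ≤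
      g * k * ∑ e ∈ E, μ e := by
    rw [Finset.sum_comm' hpair, Finset.mul_sum]
    refine Finset.sum_le_sum fun e he => ?_
    calc ∑ x ∈ e, gl e x * μ e ≤ ∑ _x ∈ e, g * μ e :=
          Finset.sum_le_sum fun x hx => Nat.mul_le_mul_right _ (hgl e he x hx)
      _ = e.card * (g * μ e) := by simp
      _ ≤ k * (g * μ e) := Nat.mul_le_mul_right _ (hcard e he)
      _ = g * k * μ e := by ring
  refine ⟨hsum, ?_⟩
  calc _ ≤ ∏ x : V, (d ^ (∑ e ∈ E.filter (fun e => x ∈ e), gl e x * μ e) *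
          ∏ e ∈ E.filter (fun e => x ∈ e), (gl e x * μ e).factorial) :=
        Finset.prod_le_prod' fun x _ => factorial_sum_le _ _ d (hdeg x)
    _ = d ^ (∑ x : V, ∑ e ∈ E.filter (fun e => x ∈ e), gl e x * μ e) *
          ∏ e ∈ E, ∏ x ∈ e, (gl e x * μ e).factorial := by
        rw [Finset.prod_mul_distrib, Finset.prod_pow_eq_pow_sum, Finset.prod_comm' hpair]
    _ ≤ _ := by
        refine Nat.mul_le_mul (Nat.pow_le_pow_right hd hsum) (Finset.prod_le_prod' fun e he => ?_)
        calc ∏ x ∈ e, (gl e x * μ e).factorial ≤ ∏ _x ∈ e, (g * μ e).factorial :=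
              Finset.prod_le_prod' fun x hx =>
                Nat.factorial_le (Nat.mul_le_mul_right _ (hgl e he x hx))
          _ = (g * μ e).factorial ^ e.card := by simp
          _ ≤ (g * μ e).factorial ^ k :=
              Nat.pow_le_pow_right (Nat.factorial_pos _) (hcard e he)
end

section
/- Let κ₁ > 0 and κ₂ > 0 be reals, and let (p_n)_{n∈ℕ} be a sequence of nonnegative reals such that ∑_{n=0}^∞ p_n ≤ 1 and such that for every real s ≥ 1 the series ∑_{n=0}^∞ n^s p_n converges with ∑_{n=0}^∞ n^s p_n ≤ (1/e) · ((κ₁/e) · s^{κ₂})^s. Then there exist constants C₁ > 0 and C₂ > 0, depending only on κ₁ and κ₂, such that p_n ≤ C₁ · exp(−C₂ · n^{1/κ₂}) for every natural number n. -/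
/-!
Markov's inequality gives `n ^ s * p n ≤ ∑ m, m ^ s * p m` for every `s ≥ 1`. Choose
`s = (n / κ₁) ^ (1 / κ₂) = C₂ * n ^ (1 / κ₂)`, with `C₂ = κ₁⁻¹ ^ (1 / κ₂)`: then
`κ₁ * s ^ κ₂ = n`, so the moment bound reads `n ^ s * p n ≤ e⁻¹ * n ^ s * e ^ (-s)`, that is,
`p n ≤ e⁻¹ * e ^ (-s)`. When this `s` is below `1` the moment condition is not available, but
`p n ≤ 1 ≤ e * e ^ (-s)`. Hence `C₁ = e` works in both cases.
-/

/-- dual form of the low-boson-density condition, Appendix B.1 of the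
paper. Let `κ₁ > 0` and `κ₂ > 0` be reals. There exist constants `C₁ > 0` and `C₂ > 0`,
depending only on `κ₁` and `κ₂`, such that: for every sequence `(p_n)` of nonnegative reals
with `∑ p_n ≤ 1` and with `∑ n^s p_n ≤ (1/e)·((κ₁/e)·s^{κ₂})^s` for every real `s ≥ 1`,
one has `p_n ≤ C₁ · exp(−C₂ · n^{1/κ₂})` for every natural number `n`. -/
theorem low_density_dual (κ₁ κ₂ : ℝ) (hκ₁ : 0 < κ₁) (hκ₂ : 0 < κ₂) :
    ∃ C₁ : ℝ, 0 < C₁ ∧ ∃ C₂ : ℝ, 0 < C₂ ∧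
      ∀ p : ℕ → ℝ, (∀ n, 0 ≤ p n) → Summable p → (∑' n, p n) ≤ 1 →
        (∀ s : ℝ, 1 ≤ s →
          Summable (fun n : ℕ => (n : ℝ) ^ s * p n) ∧
          ∑' n : ℕ, (n : ℝ) ^ s * p n ≤
            (1 / Real.exp 1) * ((κ₁ / Real.exp 1) * s ^ κ₂) ^ s) →
        ∀ n : ℕ, p n ≤ C₁ * Real.exp (-C₂ * (n : ℝ) ^ (1 / κ₂)) := by
  refine ⟨Real.exp 1, Real.exp_pos 1, κ₁⁻¹ ^ (1 / κ₂), by positivity, ?_⟩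
  intro p hp hsum hle hmom n
  set s : ℝ := κ₁⁻¹ ^ (1 / κ₂) * (n : ℝ) ^ (1 / κ₂) with hs
  rw [neg_mul, ← hs]
  rcases lt_or_ge s 1 with h1 | h1
  · calc p n ≤ ∑' m, p m := hsum.le_tsum n fun m _ => hp m
      _ ≤ 1 := hle
      _ ≤ Real.exp 1 * Real.exp (-s) := by
        rw [← Real.exp_add]
        exact Real.one_le_exp (by linarith)
  · -- For `n = 0` one has `s = 0`, since the exponent `1 / κ₂` is nonzero.
    have hn : (0 : ℝ) < n := by
      rcases (Nat.cast_nonneg n : (0 : ℝ) ≤ n).eq_or_lt with h | h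
      · rw [← h, Real.zero_rpow (by positivity), mul_zero] at hs
        linarith
      · exact h
    have hsk : s ^ κ₂ = κ₁⁻¹ * n := by
      rw [hs, ← Real.mul_rpow (by positivity) hn.le, ← Real.rpow_mul (by positivity),
        one_div_mul_cancel hκ₂.ne', Real.rpow_one]
    obtain ⟨hsm, hb⟩ := hmom s h1
    have hbase : κ₁ / Real.exp 1 * s ^ κ₂ = n * Real.exp (-1) := by
      rw [hsk, Real.exp_neg]
      field_simp
    rw [hbase, Real.mul_rpow hn.le (Real.exp_pos _).le, ← Real.exp_mul, neg_one_mul] at hb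
    have hterm : (n : ℝ) ^ s * p n ≤ ∑' m : ℕ, (m : ℝ) ^ s * p m :=
      hsm.le_tsum n fun m _ => mul_nonneg (by positivity) (hp m)
    have hpn : p n ≤ 1 / Real.exp 1 * Real.exp (-s) := by
      refine le_of_mul_le_mul_left ?_ (Real.rpow_pos_of_pos hn s)
      linarith
    refine hpn.trans (mul_le_mul_of_nonneg_right ?_ (Real.exp_pos _).le)
    have he : 1 ≤ Real.exp 1 := Real.one_le_exp zero_le_one
    exact ((div_le_one (Real.exp_pos 1)).2 he).trans he
end

section
/- Let M ≥ 1 be a real number and set κ₁ = e·(1 − e^{−1})^{−1}·M. Let (x_s)_{s≥1} be a sequence of nonnegative reals such that x₁ ≤ κ₁/e² and such that for every integer s ≥ 1: x_{s+1} ≤ x_s · x₁ + (M^{s+1}/e^{s+1}) · s^s. Then for every integer s ≥ 1: x_s ≤ (1/e) · ((κ₁/e) · s)^s. -/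
/-!
Write `E = e` and `a = κ₁ / e = M / (1 - 1/e)`, so that `a ≥ M`, the hypothesis on `x 1` reads
`x 1 ≤ a / E`, and the claim reads `x s ≤ a ^ s * s ^ s / E`. In the inductive step each of the two
terms of the recursion is at most `a ^ (s + 1) * s ^ s / E`: the first because
`x s * x 1 ≤ a ^ (s + 1) * s ^ s / E ^ 2` and `E ≥ 1`, the second because `M ≤ a` and
`E ^ (s + 1) ≥ E`. Their sum is controlled by `2 * s ^ s ≤ (s + 1) ^ (s + 1)`. The only property
of `e` that is used is `e > 1`.
-/

/-- The elementary estimate that absorbs both terms of the recursion. -/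
lemma two_mul_self_pow_le (s : ℕ) (hs : 1 ≤ s) :
    2 * (s : ℝ) ^ s ≤ ((s + 1 : ℕ) : ℝ) ^ (s + 1) := by
  have hs' : (1 : ℝ) ≤ s := by exact_mod_cast hs
  push_cast
  rw [pow_succ']
  gcongr <;> linarith

/-- the induction underlying Appendix B.2 of the paper. Let `M ≥ 1` be a
real number and set `κ₁ = e·(1 − e⁻¹)⁻¹·M`. Let `(x_s)_{s≥1}` be a sequence of nonnegative
reals such that `x₁ ≤ κ₁/e²` and such that for every integer `s ≥ 1`:
`x_{s+1} ≤ x_s · x₁ + (M^{s+1}/e^{s+1}) · s^s`. Then for every integer `s ≥ 1`: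
`x_s ≤ (1/e) · ((κ₁/e) · s)^s`. -/
theorem moment_induction (M : ℝ) (hM : 1 ≤ M) (x : ℕ → ℝ) (hx : ∀ s, 0 ≤ x s)
    (hx1 : x 1 ≤ Real.exp 1 * (1 - (Real.exp 1)⁻¹)⁻¹ * M / (Real.exp 1) ^ 2)
    (hrec : ∀ s : ℕ, 1 ≤ s →
      x (s + 1) ≤ x s * x 1 + (M ^ (s + 1) / (Real.exp 1) ^ (s + 1)) * ((s : ℝ) ^ s)) :
    ∀ s : ℕ, 1 ≤ s →
      x s ≤ (1 / Real.exp 1) *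
        ((Real.exp 1 * (1 - (Real.exp 1)⁻¹)⁻¹ * M / Real.exp 1) * (s : ℝ)) ^ s := by
  have hE : 1 < Real.exp 1 := Real.one_lt_exp_iff.mpr one_pos
  generalize Real.exp 1 = E at *
  have hE0 : 0 < E := by linarith
  have hEinv : E⁻¹ < 1 := inv_lt_one_of_one_lt₀ hE
  have hEinv0 : 0 < E⁻¹ := inv_pos.mpr hE0
  have hc : 1 ≤ (1 - E⁻¹)⁻¹ := (one_le_inv₀ (by linarith)).mpr (by linarith)
  have ha : E * (1 - E⁻¹)⁻¹ * M / E = (1 - E⁻¹)⁻¹ * M := by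
    rw [mul_assoc, mul_div_cancel_left₀ _ hE0.ne']
  have ha1 : E * (1 - E⁻¹)⁻¹ * M / E ^ 2 = (1 - E⁻¹)⁻¹ * M / E := by
    rw [sq, ← div_div, ha]
  rw [ha1] at hx1
  rw [ha]
  have hMa : M ≤ (1 - E⁻¹)⁻¹ * M := le_mul_of_one_le_left (by linarith) hc
  generalize (1 - E⁻¹)⁻¹ * M = a at *
  have ha0 : 0 ≤ a := by linarith
  intro s hs
  induction s, hs using Nat.le_induction with
  | base => simpa [div_eq_inv_mul] using hx1
  | succ s hs ih =>
    have h1 : x s * x 1 ≤ a ^ (s + 1) * (s : ℝ) ^ s / E := by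
      calc x s * x 1 ≤ (1 / E * (a * s) ^ s) * (a / E) :=
            mul_le_mul ih hx1 (hx 1) (by positivity)
        _ = (a ^ (s + 1) * (s : ℝ) ^ s / E) * E⁻¹ := by
            rw [mul_pow, pow_succ]; ring
        _ ≤ a ^ (s + 1) * (s : ℝ) ^ s / E :=
            mul_le_of_le_one_right (by positivity) hEinv.le
    have h2 : M ^ (s + 1) / E ^ (s + 1) * (s : ℝ) ^ s ≤ a ^ (s + 1) * (s : ℝ) ^ s / E := by
      have hEs : E ≤ E ^ (s + 1) := le_self_pow₀ hE.le (by omega)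
      calc M ^ (s + 1) / E ^ (s + 1) * (s : ℝ) ^ s
          ≤ a ^ (s + 1) / E * (s : ℝ) ^ s := by gcongr
        _ = a ^ (s + 1) * (s : ℝ) ^ s / E := by ring
    calc x (s + 1) ≤ x s * x 1 + M ^ (s + 1) / E ^ (s + 1) * (s : ℝ) ^ s := hrec s hs
      _ ≤ a ^ (s + 1) * (s : ℝ) ^ s / E + a ^ (s + 1) * (s : ℝ) ^ s / E := add_le_add h1 h2
      _ = a ^ (s + 1) / E * (2 * (s : ℝ) ^ s) := by ring
      _ ≤ a ^ (s + 1) / E * ((s + 1 : ℕ) : ℝ) ^ (s + 1) := by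
          gcongr
          exact two_mul_self_pow_le s hs
      _ = 1 / E * (a * ((s + 1 : ℕ) : ℝ)) ^ (s + 1) := by
          rw [mul_pow]; ring
end

section
/- Let V be a nonempty finite type and let A be a V × V matrix with real entries such that ‖A‖ < 1, where ‖·‖ denotes the operator norm induced by the ℓ∞ norm (the maximum over rows of the sum of absolute values of the entries in that row). Suppose D : V × V → ℕ is a function such that (A^m)_{x y} = 0 whenever m < D(x, y). Then the matrix 1 − A is invertible and for all x, y ∈ V: |((1 − A)^{−1})_{x y}| ≤ ‖A‖^{D(x,y)} / (1 − ‖A‖). -/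
/-!
With `nA` the `ℓ∞` operator norm, matrices form a complete normed ring, so `1 - A` is inverted by
the Neumann series `∑ A ^ m`. Each entry of `A ^ m` is at most `nA ^ m` in absolute value, and the
`(x, y)` entries of the terms with `m < D x y` vanish, so the `(x, y)` entry of the series is
bounded by the geometric tail `∑ nA ^ (m + D x y) = nA ^ D x y / (1 - nA)`.
-/

section LinftyOpNorm

attribute [local instance] Matrix.linftyOpNormedRing Matrix.linftyOpNormedAlgebra

variable {V : Type*} [Fintype V] [DecidableEq V]

theorem linftyOpNorm_eq_iSup [Nonempty V] (A : Matrix V V ℝ) :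
    ‖A‖ = ⨆ x : V, ∑ y : V, |A x y| := by
  have h : ‖A‖ = ((Finset.univ.sup fun x : V => ∑ y : V, ‖A x y‖₊ : NNReal) : ℝ) :=
    Matrix.linfty_opNorm_def A
  rw [h, ← Finset.sup'_eq_sup Finset.univ_nonempty, Finset.sup'_univ_eq_ciSup, NNReal.coe_iSup]
  simp

theorem abs_entry_le_linftyOpNorm [Nonempty V] (A : Matrix V V ℝ) (x y : V) :
    |A x y| ≤ ‖A‖ := by
  rw [linftyOpNorm_eq_iSup]
  exact (Finset.single_le_sum (f := fun z => |A x z|) (fun _ _ => abs_nonneg _)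
    (Finset.mem_univ y)).trans
    (le_ciSup (f := fun x => ∑ z, |A x z|) (Set.finite_range _).bddAbove x)

theorem abs_pow_entry_le [Nonempty V] (A : Matrix V V ℝ) (m : ℕ) (x y : V) :
    |(A ^ m) x y| ≤ ‖A‖ ^ m :=
  (abs_entry_le_linftyOpNorm _ x y).trans (norm_pow_le A m)

theorem isUnit_one_sub_of_linftyOpNorm_lt_one (A : Matrix V V ℝ) (hA : ‖A‖ < 1) :
    IsUnit (1 - A) :=
  have : CompleteSpace (Matrix V V ℝ) := FiniteDimensional.complete ℝ _
  isUnit_one_sub_of_norm_lt_one hA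

theorem hasSum_pow_entry (A : Matrix V V ℝ) (hA : ‖A‖ < 1) (x y : V) :
    HasSum (fun m : ℕ => (A ^ m) x y) ((1 - A)⁻¹ x y) := by
  have : CompleteSpace (Matrix V V ℝ) := FiniteDimensional.complete ℝ _
  have h := hasSum_geom_series_inverse A hA
  rw [← Matrix.nonsing_inv_eq_ringInverse] at h
  -- The topology of the operator norm is definitionally the product topology, so convergence of the
  -- matrix series is entrywise convergence.
  exact Pi.hasSum.mp (Pi.hasSum.mp h x) y

theorem abs_inv_entry_le [Nonempty V] (A : Matrix V V ℝ) (hA : ‖A‖ < 1) (x y : V) (d : ℕ)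
    (hd : ∀ m < d, (A ^ m) x y = 0) :
    |(1 - A)⁻¹ x y| ≤ ‖A‖ ^ d / (1 - ‖A‖) := by
  have h := hasSum_pow_entry A hA x y
  -- Drop the first `d` terms of the series, which all vanish.
  rw [← hasSum_nat_add_iff' d,
    Finset.sum_eq_zero fun m hm => hd m (Finset.mem_range.mp hm), sub_zero] at h
  have hg := (hasSum_geometric_of_lt_one (norm_nonneg A) hA).mul_left (‖A‖ ^ d)
  rw [div_eq_mul_inv, ← h.tsum_eq, ← Real.norm_eq_abs]
  refine tsum_of_norm_bounded hg fun m => ?_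
  rw [Real.norm_eq_abs, ← pow_add, add_comm d m]
  exact abs_pow_entry_le A (m + d) x y

end LinftyOpNorm

/-- abstraction of Eqs. (95)–(96) of the paper. Let `V` be a nonempty
finite type and `A` a `V × V` real matrix with `‖A‖ < 1`, where
`‖A‖ = ⨆ x, ∑ y, |A x y|` is the operator norm induced by the `ℓ∞` norm. Suppose
`D : V × V → ℕ` satisfies `(A^m)_{xy} = 0` whenever `m < D(x,y)`. Then `1 − A` is
invertible and `|((1 − A)⁻¹)_{xy}| ≤ ‖A‖^{D(x,y)} / (1 − ‖A‖)` for all `x, y`. -/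
theorem neumann_series_locality {V : Type*} [Fintype V] [Nonempty V] [DecidableEq V]
    (A : Matrix V V ℝ) (nA : ℝ) (hnA : nA = ⨆ x : V, ∑ y : V, |A x y|)
    (hA : nA < 1) (D : V → V → ℕ)
    (hD : ∀ x y : V, ∀ m : ℕ, m < D x y → (A ^ m) x y = 0) :
    IsUnit (1 - A) ∧
    ∀ x y : V, |(1 - A)⁻¹ x y| ≤ nA ^ D x y / (1 - nA) := by
  let _ := Matrix.linftyOpNormedRing (n := V) (α := ℝ)
  rw [← linftyOpNorm_eq_iSup] at hnA
  subst hnA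
  exact ⟨isUnit_one_sub_of_linftyOpNorm_lt_one A hA,
    fun x y => abs_inv_entry_le A hA x y (D x y) (hD x y)⟩
end

section
/- Let t > 0 and ν be real numbers with ν < −2t, and let r be a natural number. Then 2t·cos k + ν < 0 for all k, the number ρ = (−ν − √(ν² − 4t²))/(2t) lies in the interval (0, 1), and ∫_{−π}^{π} e^{i r k} / (2t·cos k + ν) dk = −(2π/√(ν² − 4t²)) · ρ^r (an identity of complex numbers whose value is real). -/
/-! The denominator is a multiple of the Poisson kernel of the unit disk. Since
`ρ = (-ν - √(ν² - 4t²)) / (2t)` is a root of `t z² + ν z + t`, one has on the unit circle, with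
`s = √(ν² - 4t²)`,
`1 / (2t cos k + ν) = -(1 / s) * (1 - ρ²) / (1 - 2ρ cos k + ρ²)`,
and `(1 - ρ²) / (1 - 2ρ cos k + ρ²) = (1 - ρ²) / |e^{ik} - ρ|²`. The Poisson integral formula
(`DiffContOnCl.circleAverage_poissonKernel_smul'`) for the holomorphic function `z ↦ z ^ r` then
gives its value at `ρ`, which is `ρ ^ r`. -/

/-- The Poisson integral formula for `z ↦ z ^ r` at a point `ρ` of `(0, 1)`, in the real
coordinate `k` on the unit circle. -/
lemma integral_poissonKernel_mul_exp (ρ : ℝ) (h0 : 0 < ρ) (h1 : ρ < 1) (r : ℕ) :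
    ∫ k in (-Real.pi)..Real.pi,
        (((1 - ρ ^ 2) / (1 - 2 * ρ * Real.cos k + ρ ^ 2) : ℝ) : ℂ) *
          Complex.exp (Complex.I * (r : ℂ) * (k : ℂ)) = 2 * Real.pi * (ρ : ℂ) ^ r := by
  have hw : (ρ : ℂ) ∈ Metric.ball (0 : ℂ) 1 := by
    simpa [abs_of_pos h0] using h1
  have hf : DiffContOnCl ℂ (fun z : ℂ => z ^ r) (Metric.ball 0 1) :=
    (Differentiable.diffContOnCl (by fun_prop))
  let F : ℂ → ℂ := fun z =>
    ((‖z - 0‖ ^ 2 - ‖(ρ : ℂ) - 0‖ ^ 2) / ‖(z - 0) - ((ρ : ℂ) - 0)‖ ^ 2) • z ^ r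
  have key : Real.circleAverage F 0 1 = (ρ : ℂ) ^ r := hf.circleAverage_poissonKernel_smul' hw
  have hper : Function.Periodic (fun θ : ℝ => F (circleMap 0 1 θ)) (2 * Real.pi) :=
    fun x => by simp [periodic_circleMap 0 1 x]
  have hshift := hper.intervalIntegral_add_eq 0 (-Real.pi)
  rw [zero_add, show -Real.pi + 2 * Real.pi = Real.pi by ring] at hshift
  have hcongr : ∀ k : ℝ, F (circleMap 0 1 k) =
      (((1 - ρ ^ 2) / (1 - 2 * ρ * Real.cos k + ρ ^ 2) : ℝ) : ℂ) *
          Complex.exp (Complex.I * (r : ℂ) * (k : ℂ)) := by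
    intro k
    have hn : ‖circleMap 0 1 k - (ρ : ℂ)‖ ^ 2 = 1 - 2 * ρ * Real.cos k + ρ ^ 2 := by
      rw [← Complex.normSq_eq_norm_sq, Complex.normSq_apply]
      simp only [circleMap, Complex.sub_re, Complex.sub_im, zero_add, Complex.ofReal_one, one_mul,
        Complex.exp_ofReal_mul_I_re, Complex.exp_ofReal_mul_I_im, Complex.ofReal_re,
        Complex.ofReal_im]
      linear_combination Real.sin_sq_add_cos_sq k
    have hexp : circleMap 0 1 k ^ r = Complex.exp (Complex.I * (r : ℂ) * (k : ℂ)) := by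
      simp only [circleMap, zero_add, Complex.ofReal_one, one_mul]
      rw [← Complex.exp_nat_mul]
      congr 1
      ring
    simp only [F, sub_zero, hn, hexp, Complex.real_smul, norm_circleMap_zero, abs_one, one_pow,
      Complex.norm_real, Real.norm_eq_abs, sq_abs]
  rw [Real.circleAverage_def, hshift, Complex.real_smul] at key
  simp_rw [hcongr] at key
  rw [← key]
  have : (Real.pi : ℂ) ≠ 0 := by exact_mod_cast Real.pi_ne_zero
  push_cast
  field_simp


/-- Appendix C of the paper: contour-integral evaluation for the 1D free
boson correlation function. Let `t > 0` and `ν < −2t` be reals and `r` a natural number.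
Then `2t·cos k + ν < 0` for all `k`, the number `ρ = (−ν − √(ν² − 4t²))/(2t)` lies in
`(0, 1)`, and `∫_{−π}^{π} e^{irk}/(2t·cos k + ν) dk = −(2π/√(ν² − 4t²)) · ρ^r`. -/
theorem free_boson_contour_integral (t ν : ℝ) (ht : 0 < t) (hν : ν < -2 * t) (r : ℕ) :
    (∀ k : ℝ, 2 * t * Real.cos k + ν < 0) ∧
    (-ν - Real.sqrt (ν ^ 2 - 4 * t ^ 2)) / (2 * t) ∈ Set.Ioo (0 : ℝ) 1 ∧
    ∫ k in (-Real.pi)..Real.pi,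
        Complex.exp (Complex.I * (r : ℂ) * (k : ℂ)) / ((2 * t * Real.cos k + ν : ℝ) : ℂ) =
      -(((2 * Real.pi / Real.sqrt (ν ^ 2 - 4 * t ^ 2)) : ℝ) : ℂ) *
        ((((-ν - Real.sqrt (ν ^ 2 - 4 * t ^ 2)) / (2 * t)) : ℝ) : ℂ) ^ r := by
  have hneg : ∀ k : ℝ, 2 * t * Real.cos k + ν < 0 := fun k => by
    nlinarith [Real.cos_le_one k]
  have hD : 0 < ν ^ 2 - 4 * t ^ 2 := by nlinarith
  obtain ⟨s, hs⟩ : ∃ s, s = Real.sqrt (ν ^ 2 - 4 * t ^ 2) := ⟨_, rfl⟩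
  have hs0 : 0 < s := hs ▸ Real.sqrt_pos.mpr hD
  have hs2 : s ^ 2 = ν ^ 2 - 4 * t ^ 2 := hs ▸ Real.sq_sqrt hD.le
  rw [← hs]
  obtain ⟨ρ, hρ⟩ : ∃ ρ, ρ = (-ν - s) / (2 * t) := ⟨_, rfl⟩
  rw [← hρ]
  have hsν : 2 * t * ρ = -ν - s := by rw [hρ]; field_simp
  have hroot : t * ρ ^ 2 + ν * ρ + t = 0 := by
    have : 4 * t * (t * ρ ^ 2 + ν * ρ + t) = 0 := by
      linear_combination (2 * t * ρ + ν - s) * hsν + hs2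
    simpa [ht.ne'] using this
  have h0 : 0 < ρ := by
    have : s < -ν := by nlinarith
    rw [hρ]
    exact div_pos (by linarith) (by linarith)
  have h1 : ρ < 1 := by
    -- `(-ν - 2t)² < s²` because `s² = (-ν - 2t)(-ν + 2t)`.
    have : -ν - 2 * t < s := by nlinarith
    rw [hρ, div_lt_one (by linarith)]
    linarith
  refine ⟨hneg, ⟨h0, h1⟩, ?_⟩
  have hpt : ∀ k : ℝ, Complex.exp (Complex.I * (r : ℂ) * (k : ℂ)) /
      ((2 * t * Real.cos k + ν : ℝ) : ℂ) =
      ((-(1 / s) : ℝ) : ℂ) * ((((1 - ρ ^ 2) / (1 - 2 * ρ * Real.cos k + ρ ^ 2) : ℝ) : ℂ) *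
          Complex.exp (Complex.I * (r : ℂ) * (k : ℂ))) := by
    intro k
    have hP : 0 < 1 - 2 * ρ * Real.cos k + ρ ^ 2 := by
      nlinarith [Real.cos_le_one k]
    have hreal : (2 * t * Real.cos k + ν)⁻¹ =
        -(1 / s) * ((1 - ρ ^ 2) / (1 - 2 * ρ * Real.cos k + ρ ^ 2)) := by
      rw [← one_div, neg_mul, div_mul_div_comm, ← neg_div,
        div_eq_div_iff (hneg k).ne (mul_pos hs0 hP).ne']
      linear_combination (2 * Real.cos k - 2 * ρ) * hroot +
        (1 - 2 * ρ * Real.cos k + ρ ^ 2) * hsν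
    rw [← mul_assoc, ← Complex.ofReal_mul, ← hreal, Complex.ofReal_inv, ← div_eq_inv_mul]
  simp_rw [hpt]
  rw [intervalIntegral.integral_const_mul, integral_poissonKernel_mul_exp ρ h0 h1 r]
  push_cast
  ring
end
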